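/- Let w₁, w₂ > 0. There exist a weighted two-player congestion game with weights w₁, w₂ and proportional costs, a subgame-perfect outcome A with player 1 moving first, and an action profile B such that C(B) > 0 and C(A) = (1 + w₁·w₂/(w₁² + w₂²)) · C(B). In particular, for w₁ = w₂ the ratio C(A)/C(B) equals 3/2. -/

import Mathlib

open Finset Real

/-- A weighted two-player congestion game with weights `w₁, w₂`:
a finite set of resources `Fin n`, nonempty finite collections of actions
(subsets of resources) for each player, and nonnegative affine cost
coefficients `α r`, `β r` for each resource. -/
structure CGame (w₁ w₂ : ℝ) where
  n : ℕ
  A1 : Finset (Finset (Fin n))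
  A2 : Finset (Finset (Fin n))
  A1_nonempty : A1.Nonempty
  A2_nonempty : A2.Nonempty
  α : Fin n → ℝ
  β : Fin n → ℝ
  α_nonneg : ∀ r, 0 ≤ α r
  β_nonneg : ∀ r, 0 ≤ β r

namespace CGame

variable {w₁ w₂ : ℝ}

/-- The load of resource `r` under the action profile `(a₁, a₂)`. -/
def load (G : CGame w₁ w₂) (a₁ a₂ : Finset (Fin G.n)) (r : Fin G.n) : ℝ :=
  (if r ∈ a₁ then w₁ else 0) + (if r ∈ a₂ then w₂ else 0)

/-- Uniform cost of player 1. -/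
def C1uni (G : CGame w₁ w₂) (a₁ a₂ : Finset (Fin G.n)) : ℝ :=
  ∑ r ∈ a₁, (G.α r + G.β r * G.load a₁ a₂ r)

/-- Uniform cost of player 2. -/
def C2uni (G : CGame w₁ w₂) (a₁ a₂ : Finset (Fin G.n)) : ℝ :=
  ∑ r ∈ a₂, (G.α r + G.β r * G.load a₁ a₂ r)

/-- Uniform social cost. -/
def Cuni (G : CGame w₁ w₂) (a₁ a₂ : Finset (Fin G.n)) : ℝ :=
  G.C1uni a₁ a₂ + G.C2uni a₁ a₂

/-- Proportional cost of player 1. -/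
def C1prop (G : CGame w₁ w₂) (a₁ a₂ : Finset (Fin G.n)) : ℝ :=
  w₁ * ∑ r ∈ a₁, (G.α r + G.β r * G.load a₁ a₂ r)

/-- Proportional cost of player 2. -/
def C2prop (G : CGame w₁ w₂) (a₁ a₂ : Finset (Fin G.n)) : ℝ :=
  w₂ * ∑ r ∈ a₂, (G.α r + G.β r * G.load a₁ a₂ r)

/-- Proportional social cost. -/
def Cprop (G : CGame w₁ w₂) (a₁ a₂ : Finset (Fin G.n)) : ℝ :=
  G.C1prop a₁ a₂ + G.C2prop a₁ a₂

/-- `(a₁, a₂)` is an action profile: each action is admissible for its player. -/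
def IsProfile (G : CGame w₁ w₂) (a₁ a₂ : Finset (Fin G.n)) : Prop :=
  a₁ ∈ G.A1 ∧ a₂ ∈ G.A2

/-- The game is symmetric if both players have the same actions. -/
def Symm (G : CGame w₁ w₂) : Prop := G.A1 = G.A2

/-- Pure Nash equilibrium for uniform costs. -/
def IsNashUni (G : CGame w₁ w₂) (a₁ a₂ : Finset (Fin G.n)) : Prop :=
  G.IsProfile a₁ a₂ ∧
  (∀ b₁ ∈ G.A1, G.C1uni a₁ a₂ ≤ G.C1uni b₁ a₂) ∧
  (∀ b₂ ∈ G.A2, G.C2uni a₁ a₂ ≤ G.C2uni a₁ b₂)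

/-- Pure Nash equilibrium for proportional costs. -/
def IsNashProp (G : CGame w₁ w₂) (a₁ a₂ : Finset (Fin G.n)) : Prop :=
  G.IsProfile a₁ a₂ ∧
  (∀ b₁ ∈ G.A1, G.C1prop a₁ a₂ ≤ G.C1prop b₁ a₂) ∧
  (∀ b₂ ∈ G.A2, G.C2prop a₁ a₂ ≤ G.C2prop a₁ b₂)

/-- Subgame-perfect outcome with player 1 moving first, uniform costs. -/
def IsSPE1Uni (G : CGame w₁ w₂) (a₁ a₂ : Finset (Fin G.n)) : Prop :=
  G.IsProfile a₁ a₂ ∧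
  ∃ b : Finset (Fin G.n) → Finset (Fin G.n),
    (∀ x ∈ G.A1, b x ∈ G.A2) ∧
    (∀ x ∈ G.A1, ∀ y ∈ G.A2, G.C2uni x (b x) ≤ G.C2uni x y) ∧
    a₂ = b a₁ ∧
    (∀ x ∈ G.A1, G.C1uni a₁ a₂ ≤ G.C1uni x (b x))

/-- Subgame-perfect outcome with player 2 moving first, uniform costs. -/
def IsSPE2Uni (G : CGame w₁ w₂) (a₁ a₂ : Finset (Fin G.n)) : Prop :=
  G.IsProfile a₁ a₂ ∧
  ∃ b : Finset (Fin G.n) → Finset (Fin G.n),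
    (∀ x ∈ G.A2, b x ∈ G.A1) ∧
    (∀ x ∈ G.A2, ∀ y ∈ G.A1, G.C1uni (b x) x ≤ G.C1uni y x) ∧
    a₁ = b a₂ ∧
    (∀ x ∈ G.A2, G.C2uni a₁ a₂ ≤ G.C2uni (b x) x)

/-- Subgame-perfect outcome with player 1 moving first, proportional costs. -/
def IsSPE1Prop (G : CGame w₁ w₂) (a₁ a₂ : Finset (Fin G.n)) : Prop :=
  G.IsProfile a₁ a₂ ∧
  ∃ b : Finset (Fin G.n) → Finset (Fin G.n),
    (∀ x ∈ G.A1, b x ∈ G.A2) ∧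
    (∀ x ∈ G.A1, ∀ y ∈ G.A2, G.C2prop x (b x) ≤ G.C2prop x y) ∧
    a₂ = b a₁ ∧
    (∀ x ∈ G.A1, G.C1prop a₁ a₂ ≤ G.C1prop x (b x))

/-- Subgame-perfect outcome with player 2 moving first, proportional costs. -/
def IsSPE2Prop (G : CGame w₁ w₂) (a₁ a₂ : Finset (Fin G.n)) : Prop :=
  G.IsProfile a₁ a₂ ∧
  ∃ b : Finset (Fin G.n) → Finset (Fin G.n),
    (∀ x ∈ G.A2, b x ∈ G.A1) ∧
    (∀ x ∈ G.A2, ∀ y ∈ G.A1, G.C1prop (b x) x ≤ G.C1prop y x) ∧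
    a₁ = b a₂ ∧
    (∀ x ∈ G.A2, G.C2prop a₁ a₂ ≤ G.C2prop (b x) x)

end CGame

namespace CGame

variable {w₁ w₂ : ℝ}

theorem C1prop_singleton (G : CGame w₁ w₂) (i j : Fin G.n) :
    G.C1prop {i} {j} = w₁ * (G.α i + G.β i * (w₁ + if i = j then w₂ else 0)) := by
  simp [C1prop, load]

theorem C2prop_singleton (G : CGame w₁ w₂) (i j : Fin G.n) :
    G.C2prop {i} {j} = w₂ * (G.α j + G.β j * ((if j = i then w₁ else 0) + w₂)) := by
  simp [C2prop, load]

end CGame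

/-- Player 1 chooses between resources `0` and `1`, player 2 between `1` and `2`. Resources `0` and
`2` have constant costs `w₁` and `w₁ + w₂`, and the cost of resource `1` is its load. -/
def lowerBoundGame (w₁ w₂ : ℝ) (h₁ : 0 < w₁) (h₂ : 0 < w₂) : CGame w₁ w₂ where
  n := 3
  A1 := {{0}, {1}}
  A2 := {{1}, {2}}
  A1_nonempty := by simp
  A2_nonempty := by simp
  α := ![w₁, 0, w₁ + w₂]
  β := ![0, 1, 0]
  α_nonneg r := by fin_cases r <;> simp <;> positivity
  β_nonneg r := by fin_cases r <;> simp

theorem lowerBoundGame_C1prop {w₁ w₂ : ℝ} (h₁ : 0 < w₁) (h₂ : 0 < w₂) (i j : Fin 3) :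
    (lowerBoundGame w₁ w₂ h₁ h₂).C1prop ({i} : Finset (Fin 3)) ({j} : Finset (Fin 3)) =
      w₁ * (![w₁, 0, w₁ + w₂] i + ![0, 1, 0] i * (w₁ + if i = j then w₂ else 0)) :=
  CGame.C1prop_singleton (lowerBoundGame w₁ w₂ h₁ h₂) i j

theorem lowerBoundGame_C2prop {w₁ w₂ : ℝ} (h₁ : 0 < w₁) (h₂ : 0 < w₂) (i j : Fin 3) :
    (lowerBoundGame w₁ w₂ h₁ h₂).C2prop ({i} : Finset (Fin 3)) ({j} : Finset (Fin 3)) =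
      w₂ * (![w₁, 0, w₁ + w₂] j + ![0, 1, 0] j * ((if j = i then w₁ else 0) + w₂)) :=
  CGame.C2prop_singleton (lowerBoundGame w₁ w₂ h₁ h₂) i j

theorem mem_lowerBoundGame_A1 {w₁ w₂ : ℝ} (h₁ : 0 < w₁) (h₂ : 0 < w₂) (x : Finset (Fin 3)) :
    x ∈ (lowerBoundGame w₁ w₂ h₁ h₂).A1 ↔ x = {0} ∨ x = {1} := by
  change x ∈ ({{0}, {1}} : Finset (Finset (Fin 3))) ↔ _
  simp

theorem mem_lowerBoundGame_A2 {w₁ w₂ : ℝ} (h₁ : 0 < w₁) (h₂ : 0 < w₂) (x : Finset (Fin 3)) :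
    x ∈ (lowerBoundGame w₁ w₂ h₁ h₂).A2 ↔ x = {1} ∨ x = {2} := by
  change x ∈ ({{1}, {2}} : Finset (Finset (Fin 3))) ↔ _
  simp

theorem lowerBoundGame_isSPE1Prop {w₁ w₂ : ℝ} (h₁ : 0 < w₁) (h₂ : 0 < w₂) :
    (lowerBoundGame w₁ w₂ h₁ h₂).IsSPE1Prop ({1} : Finset (Fin 3)) ({2} : Finset (Fin 3)) := by
  let reply : Finset (Fin 3) → Finset (Fin 3) := fun x => if x = {1} then {2} else {1}
  have reply_zero : reply {0} = {1} := by simp [reply]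
  have reply_one : reply {1} = {2} := by simp [reply]
  refine ⟨⟨(mem_lowerBoundGame_A1 h₁ h₂ _).2 (.inr rfl),
    (mem_lowerBoundGame_A2 h₁ h₂ _).2 (.inr rfl)⟩, reply, ?_, ?_, reply_one.symm, ?_⟩
  · intro x hx
    refine (mem_lowerBoundGame_A2 h₁ h₂ _).2 ?_
    rcases (mem_lowerBoundGame_A1 h₁ h₂ x).1 hx with rfl | rfl
    · exact .inl reply_zero
    · exact .inr reply_one
  · intro x hx y hy
    rcases (mem_lowerBoundGame_A1 h₁ h₂ x).1 hx with rfl | rfl <;>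
    rcases (mem_lowerBoundGame_A2 h₁ h₂ y).1 hy with rfl | rfl <;>
    simp only [reply_zero, reply_one, lowerBoundGame_C2prop] <;>
    simp [h₁.le, h₂]
  · intro x hx
    rcases (mem_lowerBoundGame_A1 h₁ h₂ x).1 hx with rfl | rfl <;>
    simp only [reply_zero, reply_one, lowerBoundGame_C1prop] <;>
    simp

/-- matching lower-bound instance for sequential proportionally
weighted two-player congestion games, with player 1 moving first; for equal
weights the ratio equals `3/2`. -/
theorem poa_seq_prop_lower (w₁ w₂ : ℝ) (h₁ : 0 < w₁) (h₂ : 0 < w₂) :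
    ∃ (G : CGame w₁ w₂) (a₁ a₂ b₁ b₂ : Finset (Fin G.n)),
      G.IsSPE1Prop a₁ a₂ ∧ G.IsProfile b₁ b₂ ∧ 0 < G.Cprop b₁ b₂ ∧
      G.Cprop a₁ a₂ =
        (1 + w₁ * w₂ / (w₁ ^ 2 + w₂ ^ 2)) * G.Cprop b₁ b₂ ∧
      (w₁ = w₂ → G.Cprop a₁ a₂ / G.Cprop b₁ b₂ = 3 / 2) := by
  have hA : (lowerBoundGame w₁ w₂ h₁ h₂).Cprop ({1} : Finset (Fin 3)) ({2} : Finset (Fin 3)) =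
      w₁ ^ 2 + w₂ ^ 2 + w₁ * w₂ := by
    refine (congrArg₂ (· + ·) (lowerBoundGame_C1prop h₁ h₂ 1 2)
      (lowerBoundGame_C2prop h₁ h₂ 1 2)).trans ?_
    simp
    ring
  have hB : (lowerBoundGame w₁ w₂ h₁ h₂).Cprop ({0} : Finset (Fin 3)) ({1} : Finset (Fin 3)) =
      w₁ ^ 2 + w₂ ^ 2 := by
    refine (congrArg₂ (· + ·) (lowerBoundGame_C1prop h₁ h₂ 0 1)
      (lowerBoundGame_C2prop h₁ h₂ 0 1)).trans ?_
    simp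
    ring
  refine ⟨lowerBoundGame w₁ w₂ h₁ h₂, ({1} : Finset (Fin 3)), ({2} : Finset (Fin 3)),
    ({0} : Finset (Fin 3)), ({1} : Finset (Fin 3)), lowerBoundGame_isSPE1Prop h₁ h₂,
    ⟨(mem_lowerBoundGame_A1 h₁ h₂ _).2 (.inl rfl), (mem_lowerBoundGame_A2 h₁ h₂ _).2 (.inl rfl)⟩,
    ?_, ?_, ?_⟩
  · rw [hB]
    positivity
  · rw [hA, hB]
    field_simp
  · rintro rfl
    rw [hA, hB]
    field_simp
    norm_num
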